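/- arXiv:2205.15564 — 3 statements merged into one kernel-verified Lean document; each statement's English description precedes it below -/
import Mathlib

section
/- Fix data x = (x_1,…,x_ℓ) ∈ 𝔽_q^ℓ. For every subset C ⊆ {1,…,n} with |C| = t, the map from 𝔽_q^t to 𝔽_q^C sending a noise vector z = (z_1,…,z_t) to the tuple of secret shares (f_{x,z}(α_j))_{j∈C} is a bijection. (This is the key step in the information-theoretic t-privacy of the Lagrange data sharing of SecFC: any t colluding clients' shares are consistent with every possible noise pattern in exactly one way.) -/
open Polynomial

/-- The Lagrange/LCC encoding polynomial of data `x` and noise `z`: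
the unique polynomial of degree at most `ℓ + t - 1` taking value `x u` at `β u`
for `u < ℓ` and value `z u` at `β (ℓ + u)` for `u < t`. -/
noncomputable def lccEncode {F : Type*} [Field F] {ℓ t : ℕ} (β : Fin (ℓ + t) → F)
    (x : Fin ℓ → F) (z : Fin t → F) : F[X] :=
  Lagrange.interpolate Finset.univ β (Fin.append x z)

/-!
A polynomial of degree less than `ℓ + t` that takes the values `x` at the `ℓ` data nodes is
determined by its values at any `t` further nodes, and these values are arbitrary. Replacing the
noise nodes by the evaluation points of the `t` clients in `C` therefore gives a second encoding
of the same polynomials: encoding with respect to the new nodes and reading off the values at the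
old noise nodes inverts the share map.
-/

section

variable {F : Type*} [Field F] {ℓ t : ℕ} {β γ : Fin (ℓ + t) → F}

theorem degree_lccEncode_lt (hβ : Function.Injective β) (x : Fin ℓ → F) (z : Fin t → F) :
    (lccEncode β x z).degree < (ℓ + t : ℕ) := by
  simpa [lccEncode] using
    Lagrange.degree_interpolate_lt (s := Finset.univ) (Fin.append x z) hβ.injOn

theorem eval_lccEncode_castAdd (hβ : Function.Injective β) (x : Fin ℓ → F) (z : Fin t → F)
    (u : Fin ℓ) : (lccEncode β x z).eval (β (Fin.castAdd t u)) = x u :=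
  (Lagrange.eval_interpolate_at_node _ hβ.injOn (Finset.mem_univ _)).trans
    (Fin.append_left x z u)

theorem eval_lccEncode_natAdd (hβ : Function.Injective β) (x : Fin ℓ → F) (z : Fin t → F)
    (u : Fin t) : (lccEncode β x z).eval (β (Fin.natAdd ℓ u)) = z u :=
  (Lagrange.eval_interpolate_at_node _ hβ.injOn (Finset.mem_univ _)).trans
    (Fin.append_right x z u)

theorem eq_lccEncode (hβ : Function.Injective β) {p : F[X]} (hp : p.degree < (ℓ + t : ℕ)) :
    p = lccEncode β (fun u ↦ p.eval (β (Fin.castAdd t u)))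
      (fun u ↦ p.eval (β (Fin.natAdd ℓ u))) := by
  refine Lagrange.eq_interpolate_of_eval_eq _ hβ.injOn (by simpa using hp) fun u _ ↦ ?_
  cases u using Fin.addCases <;> simp

theorem lccEncode_eval_lccEncode (hβ : Function.Injective β) (hγ : Function.Injective γ)
    (hβγ : ∀ u, β (Fin.castAdd t u) = γ (Fin.castAdd t u)) (x : Fin ℓ → F) (z : Fin t → F) :
    lccEncode γ x (fun u ↦ (lccEncode β x z).eval (γ (Fin.natAdd ℓ u))) = lccEncode β x z := by
  have h := eq_lccEncode hγ (degree_lccEncode_lt hβ x z)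
  simp only [← hβγ, eval_lccEncode_castAdd hβ] at h
  exact h.symm

theorem bijective_eval_lccEncode_natAdd (hβ : Function.Injective β) (hγ : Function.Injective γ)
    (hβγ : ∀ u, β (Fin.castAdd t u) = γ (Fin.castAdd t u)) (x : Fin ℓ → F) :
    Function.Bijective
      (fun (z : Fin t → F) (u : Fin t) ↦ (lccEncode β x z).eval (γ (Fin.natAdd ℓ u))) := by
  refine Function.bijective_iff_has_inverse.mpr
    ⟨fun y u ↦ (lccEncode γ x y).eval (β (Fin.natAdd ℓ u)), fun z ↦ ?_, fun y ↦ ?_⟩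
  · simp only [lccEncode_eval_lccEncode hβ hγ hβγ, eval_lccEncode_natAdd hβ]
  · simp only [lccEncode_eval_lccEncode hγ hβ fun u ↦ (hβγ u).symm, eval_lccEncode_natAdd hγ]

theorem secfc_share_map_bijective_general {ι : Type*} (hβ : Function.Injective β) {α : ι → F}
    {C : Finset ι} (hα : Set.InjOn α C) (hαβ : ∀ j ∈ C, ∀ u, α j ≠ β (Fin.castAdd t u))
    (x : Fin ℓ → F) (hC : C.card = t) :
    Function.Bijective (fun (z : Fin t → F) (j : C) ↦ (lccEncode β x z).eval (α j)) := by
  let e : C ≃ Fin t := C.equivFinOfCardEq hC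
  let γ : Fin (ℓ + t) → F := Fin.append (fun u ↦ β (Fin.castAdd t u)) (fun u ↦ α (e.symm u))
  have hγ : Function.Injective γ := Fin.append_injective_iff.mpr
    ⟨hβ.comp (Fin.castAdd_injective ℓ t), hα.injective.comp e.symm.injective,
      fun u v ↦ (hαβ _ (e.symm v).2 u).symm⟩
  have hβγ (u : Fin ℓ) : β (Fin.castAdd t u) = γ (Fin.castAdd t u) := by simp [γ]
  have hshare (j : C) : α j = γ (Fin.natAdd ℓ (e j)) := by simp [γ]
  simp only [hshare]
  exact (e.symm.arrowCongr (Equiv.refl F)).bijective.comp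
    (bijective_eval_lccEncode_natAdd hβ hγ hβγ x)

end

/-- For fixed data `x`, the map sending a noise vector `z` to the tuple of secret
shares of any `t` colluding clients `C` is a bijection. -/
theorem secfc_share_map_bijective
    {F : Type*} [Field F] [Fintype F]
    (ℓ t n : ℕ) (hℓ : 0 < ℓ) (ht : 0 < t) (hn : 0 < n)
    (β : Fin (ℓ + t) → F) (hβ : Function.Injective β)
    (α : Fin n → F) (hα : Function.Injective α)
    (hαβ : ∀ j u, α j ≠ β u)
    (x : Fin ℓ → F)
    (C : Finset (Fin n)) (hC : C.card = t) :
    Function.Bijective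
      (fun (z : Fin t → F) (j : C) => (lccEncode β x z).eval (α (j : Fin n))) :=
  secfc_share_map_bijective_general hβ hα.injOn (fun j _ _ ↦ hαβ j _) x hC
end

section
/- Let L_1,…,L_{ℓ+t} be the Lagrange basis polynomials for the nodes β_1,…,β_{ℓ+t} (so L_w has degree ℓ+t−1 and L_w(β_v) = 1 if v = w and 0 otherwise). For every subset C ⊆ {1,…,n} with |C| = t, the 𝔽_q-linear map from 𝔽_q^t to 𝔽_q^C sending z = (z_1,…,z_t) to the tuple (Σ_{u=1}^t z_u · L_{ℓ+u}(α_j))_{j∈C} is bijective; equivalently, the t×t matrix with entries L_{ℓ+u}(α_j), for j ∈ C and u ∈ {1,…,t}, is invertible over 𝔽_q. -/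
open Polynomial

/-!
The map sends `z` to the values at the points `α j`, `j ∈ C`, of the polynomial `P` of degree less
than `ℓ + t` which takes the values `0` at the first `ℓ` nodes and `z` at the last `t`. If these
values vanish, then `P` has `ℓ + t` distinct roots, namely the first `ℓ` nodes and the `t` points
`α j`. So `P = 0`, and hence `z = 0`; bijectivity follows by comparing dimensions.
-/

lemma eq_zero_of_degree_lt_card_add_card_of_eval_eq_zero {R ι κ : Type*} [CommRing R] [IsDomain R]
    {s : Finset ι} {t : Finset κ} {v : ι → R} {x : κ → R} (hv : Set.InjOn v s)
    (hx : Set.InjOn x t) (hvx : ∀ i ∈ s, ∀ k ∈ t, v i ≠ x k) {p : R[X]}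
    (hdeg : p.degree < (s.card + t.card : ℕ)) (hpv : ∀ i ∈ s, p.eval (v i) = 0)
    (hpx : ∀ k ∈ t, p.eval (x k) = 0) : p = 0 := by
  classical
  have hdisj : Disjoint (s.image v) (t.image x) := by
    simpa only [Finset.disjoint_iff_ne, Finset.forall_mem_image] using hvx
  refine eq_zero_of_degree_lt_of_eval_finset_eq_zero (s.image v ∪ t.image x) ?_ ?_
  · rwa [Finset.card_union_of_disjoint hdisj, Finset.card_image_of_injOn hv,
      Finset.card_image_of_injOn hx]
  · simp only [Finset.forall_mem_union, Finset.forall_mem_image]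
    exact ⟨hpv, hpx⟩

section ExtendInterpolateEval

variable {F ι τ κ : Type*} [Field F] [DecidableEq ι]

/-- The linear map sending `z` to the values at the points `x k` of the Lagrange interpolant on the
nodes `v i`, `i ∈ s`, with value `z u` at the node `v (f u)` and value `0` at the nodes indexed
outside the range of `f`. The secrets of the scheme sit at the nodes set to `0`, its noise at the
others. -/
noncomputable def extendInterpolateEval (s : Finset ι) (v : ι → F) (f : τ → ι) (x : κ → F) :
    (τ → F) →ₗ[F] (κ → F) :=
  LinearMap.pi (fun k => leval (x k)) ∘ₗ Lagrange.interpolate s v ∘ₗ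
    Function.ExtendByZero.linearMap F f

variable {s : Finset ι} {v : ι → F} {f : τ → ι} {x : κ → F}

lemma extendInterpolateEval_apply (z : τ → F) (k : κ) :
    extendInterpolateEval s v f x z k =
      (Lagrange.interpolate s v (Function.extend f z 0)).eval (x k) :=
  rfl

lemma extendInterpolateEval_apply_eq_sum [Fintype τ] (hf : Function.Injective f)
    (hfs : ∀ u, f u ∈ s) (z : τ → F) (k : κ) :
    extendInterpolateEval s v f x z k = ∑ u, z u * (Lagrange.basis s v (f u)).eval (x k) := by
  simp only [extendInterpolateEval_apply, Lagrange.interpolate_apply, eval_finsetSum, eval_mul,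
    eval_C]
  symm
  refine Finset.sum_of_injOn f hf.injOn (fun u _ => hfs u) (fun i _ hi => ?_) fun u _ => ?_
  · rw [Function.extend_apply' _ _ _ (by simpa using hi), Pi.zero_apply, zero_mul]
  · rw [hf.extend_apply]

lemma extendInterpolateEval_injective [Fintype τ] [Fintype κ] (hv : Set.InjOn v s)
    (hf : Function.Injective f) (hfs : ∀ u, f u ∈ s) (hx : Function.Injective x)
    (hcard : Fintype.card τ ≤ Fintype.card κ)
    (hxv : ∀ k, ∀ i ∈ s, i ∉ Set.range f → x k ≠ v i) :
    Function.Injective (extendInterpolateEval s v f x) := by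
  refine (injective_iff_map_eq_zero _).2 fun z hz => ?_
  let P := Lagrange.interpolate s v (Function.extend f z 0)
  let zeroNodes := s \ Finset.univ.image f
  have eval_node : ∀ i ∈ s, P.eval (v i) = Function.extend f z 0 i := fun i hi =>
    Lagrange.eval_interpolate_at_node _ hv hi
  have mem_zeroNodes {i : ι} : i ∈ zeroNodes ↔ i ∈ s ∧ i ∉ Set.range f := by
    simp [zeroNodes]
  have card_le : s.card ≤ zeroNodes.card + Fintype.card κ :=
    calc s.card ≤ zeroNodes.card + (Finset.univ.image f).card :=
          Nat.sub_le_iff_le_add.1 (Finset.le_card_sdiff _ _)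
      _ ≤ zeroNodes.card + Fintype.card κ := by
          gcongr
          exact Finset.card_image_le.trans hcard
  have hP_zero : P = 0 := by
    refine eq_zero_of_degree_lt_card_add_card_of_eval_eq_zero (s := zeroNodes) (t := Finset.univ)
      (hv.mono Finset.sdiff_subset) hx.injOn (fun i hi k _ => ?_)
      ((Lagrange.degree_interpolate_lt _ hv).trans_le (by exact_mod_cast card_le))
      (fun i hi => ?_) (fun k _ => congrFun hz k)
    · obtain ⟨his, hif⟩ := mem_zeroNodes.1 hi
      exact (hxv k i his hif).symm
    · obtain ⟨his, hif⟩ := mem_zeroNodes.1 hi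
      rw [eval_node i his, Function.extend_apply' _ _ _ hif, Pi.zero_apply]
  funext u
  calc z u = P.eval (v (f u)) := by rw [eval_node _ (hfs u), hf.extend_apply]
    _ = 0 := by rw [hP_zero, eval_zero]

lemma extendInterpolateEval_bijective [Fintype τ] [Fintype κ] (hv : Set.InjOn v s)
    (hf : Function.Injective f) (hfs : ∀ u, f u ∈ s) (hx : Function.Injective x)
    (hcard : Fintype.card τ = Fintype.card κ)
    (hxv : ∀ k, ∀ i ∈ s, i ∉ Set.range f → x k ≠ v i) :
    Function.Bijective (extendInterpolateEval s v f x) :=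
  have hinj := extendInterpolateEval_injective hv hf hfs hx hcard.le hxv
  ⟨hinj, (LinearMap.injective_iff_surjective_of_finrank_eq_finrank (by simpa using hcard)).1 hinj⟩

theorem secfc_noise_basis_map_bijective_general [Fintype τ] [DecidableEq τ] [Fintype κ]
    (hv : Set.InjOn v s) (hf : Function.Injective f) (hfs : ∀ u, f u ∈ s)
    (hx : Function.Injective x) (hcard : Fintype.card τ = Fintype.card κ)
    (hxv : ∀ k, ∀ i ∈ s, i ∉ Set.range f → x k ≠ v i) :
    Function.Bijective
      (fun (z : τ → F) (k : κ) => ∑ u, z u * (Lagrange.basis s v (f u)).eval (x k))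
    ∧ ∀ e : τ ≃ κ,
        IsUnit (Matrix.of fun j u : τ => (Lagrange.basis s v (f u)).eval (x (e j))) := by
  have hbij := extendInterpolateEval_bijective hv hf hfs hx hcard hxv
  refine ⟨?_, fun e => ?_⟩
  · convert hbij using 3 with z k
    exact (extendInterpolateEval_apply_eq_sum hf hfs z k).symm
  · have mulVec_eq : (Matrix.of fun j u : τ => (Lagrange.basis s v (f u)).eval (x (e j))).mulVec =
        (· ∘ e) ∘ extendInterpolateEval s v f x := by
      ext z j
      simp only [Function.comp_apply, extendInterpolateEval_apply_eq_sum hf hfs, Matrix.mulVec,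
        dotProduct, Matrix.of_apply, mul_comm]
    rw [← Matrix.mulVec_injective_iff_isUnit, mulVec_eq]
    exact e.surjective.injective_comp_right.comp hbij.injective

end ExtendInterpolateEval

/-- The noise-to-shares linear map built from the Lagrange basis polynomials
`L_{ℓ+1}, …, L_{ℓ+t}` (for nodes `β`) evaluated at the points `α j`, `j ∈ C`,
is bijective for every set `C` of `t` clients; equivalently, the corresponding
`t × t` matrix (for any enumeration of `C`) is invertible over `𝔽_q`. -/
theorem secfc_noise_basis_map_bijective
    {F : Type*} [Field F] [Fintype F]
    (ℓ t n : ℕ) (hℓ : 0 < ℓ) (ht : 0 < t) (hn : 0 < n)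
    (β : Fin (ℓ + t) → F) (hβ : Function.Injective β)
    (α : Fin n → F) (hα : Function.Injective α)
    (hαβ : ∀ j u, α j ≠ β u)
    (C : Finset (Fin n)) (hC : C.card = t) :
    Function.Bijective
      (fun (z : Fin t → F) (j : C) =>
        ∑ u : Fin t, z u * (Lagrange.basis Finset.univ β (Fin.natAdd ℓ u)).eval (α (j : Fin n)))
    ∧ ∀ e : Fin t ≃ {j // j ∈ C},
        IsUnit (Matrix.of fun (j u : Fin t) =>
          (Lagrange.basis Finset.univ β (Fin.natAdd ℓ u)).eval (α ((e j : {j // j ∈ C}) : Fin n))) :=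
  secfc_noise_basis_map_bijective_general hβ.injOn (Fin.natAdd_injective t ℓ) (by simp)
    (hα.comp Subtype.val_injective) (by simp [hC]) fun j i _ _ => hαβ j i
end

section
/- Fix data x = (x_1,…,x_ℓ) ∈ 𝔽_q^ℓ. For every subset C ⊆ {1,…,n} with |C| ≤ t, the map from 𝔽_q^t to 𝔽_q^C sending a noise vector z to the share tuple (f_{x,z}(α_j))_{j∈C} is surjective, and every fiber of this map has exactly q^{t−|C|} elements. -/
open Polynomial

/-!
The share map `z ↦ (f_{x,z}(α_j))_j` is affine in `z`, so each of its nonempty fibers is a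
translate of the kernel of its linear part. It is surjective because at most `ℓ + t` values are
imposed when the data is prescribed at `ℓ` of the nodes and the shares at the points `α_j`: a
polynomial of degree below `ℓ + t` interpolates them, and its values at the noise nodes are the
required noise. The kernel then has dimension `t - |C|` by rank-nullity.
-/

open Module in
theorem nonempty_affineMap_fiber_equiv_of_surjective {K V P W Q : Type*} [DivisionRing K]
    [AddCommGroup V] [Module K V] [FiniteDimensional K V] [AddTorsor V P]
    [AddCommGroup W] [Module K W] [AddTorsor W Q]
    {f : P →ᵃ[K] Q} (hf : Function.Surjective f) (y : Q) :
    Nonempty ({p : P // f p = y} ≃ (Fin (finrank K V - finrank K W) → K)) := by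
  obtain ⟨p₀, rfl⟩ := hf y
  let fiberEquivKer : {p : P // f p = f p₀} ≃ LinearMap.ker f.linear :=
    (Equiv.vaddConst p₀).symm.subtypeEquiv fun p => by
      rw [Equiv.coe_vaddConst_symm, LinearMap.mem_ker, f.linearMap_vsub, vsub_eq_zero_iff_eq]
  have finrank_ker : finrank K (LinearMap.ker f.linear) = finrank K V - finrank K W := by
    rw [← f.linear.finrank_range_add_finrank_ker,
      LinearMap.range_eq_top.mpr (f.linear_surjective_iff.mpr hf), finrank_top,
      Nat.add_sub_cancel_left]
  exact ⟨fiberEquivKer.trans (finBasisOfFinrankEq K _ finrank_ker).equivFun.toEquiv⟩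

theorem append_add_append {M : Type*} [Add M] {m n : ℕ} (a a' : Fin m → M) (b b' : Fin n → M) :
    Fin.append a b + Fin.append a' b' = Fin.append (a + a') (b + b') := by
  ext i
  induction i using Fin.addCases <;> simp

theorem smul_append {R M : Type*} [SMul R M] {m n : ℕ} (c : R) (a : Fin m → M) (b : Fin n → M) :
    c • Fin.append a b = Fin.append (c • a) (c • b) := by
  ext i
  induction i using Fin.addCases <;> simp

theorem exists_degree_lt_eval_eq {F κ : Type*} [Field F] [Fintype κ] {v : κ → F}
    (hv : Function.Injective v) (r : κ → F) :
    ∃ g : F[X], g.degree < Fintype.card κ ∧ ∀ i, g.eval (v i) = r i := by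
  classical
  exact ⟨Lagrange.interpolate Finset.univ v r, Lagrange.degree_interpolate_lt r hv.injOn,
    fun i => Lagrange.eval_interpolate_at_node r hv.injOn (Finset.mem_univ i)⟩

section LCC

variable {F : Type*} [Field F] {ℓ t : ℕ} (β : Fin (ℓ + t) → F) {ι : Type*} (α : ι → F)

theorem lccEncode_add (x x' : Fin ℓ → F) (z z' : Fin t → F) :
    lccEncode β (x + x') (z + z') = lccEncode β x z + lccEncode β x' z' := by
  simp only [lccEncode, ← append_add_append, map_add]

theorem lccEncode_smul (c : F) (x : Fin ℓ → F) (z : Fin t → F) :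
    lccEncode β (c • x) (c • z) = c • lccEncode β x z := by
  simp only [lccEncode, ← smul_append, map_smul]

/-- The map from noise vectors to share tuples at the points `α`, for the zero data vector. It is
the linear part of `lccShareMap`. -/
@[simps]
noncomputable def lccShareLinearMap : (Fin t → F) →ₗ[F] (ι → F) where
  toFun z j := (lccEncode β 0 z).eval (α j)
  map_add' z z' := by
    ext j
    simpa using congrArg (eval (α j)) (lccEncode_add β 0 0 z z')
  map_smul' c z := by
    ext j
    simpa using congrArg (eval (α j)) (lccEncode_smul β c 0 z)

/-- The map from noise vectors to share tuples at the points `α`, for fixed data `x`. It is bundled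
as an affine map because nonzero data contributes a constant term. -/
noncomputable def lccShareMap (x : Fin ℓ → F) : (Fin t → F) →ᵃ[F] (ι → F) where
  toFun z j := (lccEncode β x z).eval (α j)
  linear := lccShareLinearMap β α
  map_vadd' z v := by
    ext j
    simpa using congrArg (eval (α j)) (lccEncode_add β 0 x v z)

variable {β α}

theorem eq_lccEncode_of_degree_lt (hβ : Function.Injective β) {g : F[X]}
    (hdeg : g.degree < (ℓ + t : ℕ)) :
    g = lccEncode β (fun i => g.eval (β (Fin.castAdd t i)))
      (fun u => g.eval (β (Fin.natAdd ℓ u))) := by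
  refine Lagrange.eq_interpolate_of_eval_eq _ hβ.injOn (by simpa using hdeg) fun i _ => ?_
  induction i using Fin.addCases <;> simp

theorem lccShareMap_surjective [Fintype ι] (hβ : Function.Injective β)
    (hα : Function.Injective α) (hαβ : ∀ j i, α j ≠ β (Fin.castAdd t i))
    (hι : Fintype.card ι ≤ t) (x : Fin ℓ → F) :
    Function.Surjective (lccShareMap β α x) := by
  intro y
  have nodes_injective : Function.Injective (Sum.elim (β ∘ Fin.castAdd t) α) :=
    (hβ.comp (Fin.castAdd_injective ℓ t)).sumElim hα fun i j => (hαβ j i).symm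
  obtain ⟨g, hdeg, hg⟩ := exists_degree_lt_eval_eq nodes_injective (Sum.elim x y)
  have hdeg' : g.degree < (ℓ + t : ℕ) := hdeg.trans_le <|
    Nat.cast_le.mpr (by simpa using hι)
  have data_eq : (fun i => g.eval (β (Fin.castAdd t i))) = x := funext fun i => hg (Sum.inl i)
  have g_eq := eq_lccEncode_of_degree_lt hβ hdeg'
  rw [data_eq] at g_eq
  refine ⟨fun u => g.eval (β (Fin.natAdd ℓ u)), funext fun j => ?_⟩
  exact (congrArg (eval (α j)) g_eq).symm.trans (hg (Sum.inr j))

end LCC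

open Cardinal in
theorem secfc_share_map_surjective_fibers_general {F : Type*} [Field F] {ℓ t : ℕ}
    {β : Fin (ℓ + t) → F} (hβ : Function.Injective β)
    {ι : Type*} [Fintype ι] {α : ι → F} (hα : Function.Injective α)
    (hαβ : ∀ j i, α j ≠ β (Fin.castAdd t i)) (hι : Fintype.card ι ≤ t) (x : Fin ℓ → F) :
    Function.Surjective (fun (z : Fin t → F) (j : ι) => (lccEncode β x z).eval (α j)) ∧
      ∀ y : ι → F, #{z : Fin t → F // (fun j => (lccEncode β x z).eval (α j)) = y} =
        #F ^ (t - Fintype.card ι) := by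
  have hsurj := lccShareMap_surjective hβ hα hαβ hι x
  refine ⟨hsurj, fun y => ?_⟩
  obtain ⟨e⟩ := nonempty_affineMap_fiber_equiv_of_surjective hsurj y
  exact (mk_congr e).trans (by simp)

/-- For fixed data `x` and any set `C` of at most `t` clients, the map from noise
vectors to the tuple of shares on `C` is surjective, and every fiber has exactly
`q^(t - |C|)` elements. -/
theorem secfc_share_map_surjective_fibers
    {F : Type*} [Field F] [Fintype F]
    (ℓ t n : ℕ) (hℓ : 0 < ℓ) (ht : 0 < t) (hn : 0 < n)
    (β : Fin (ℓ + t) → F) (hβ : Function.Injective β)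
    (α : Fin n → F) (hα : Function.Injective α)
    (hαβ : ∀ j u, α j ≠ β u)
    (x : Fin ℓ → F)
    (C : Finset (Fin n)) (hC : C.card ≤ t) :
    Function.Surjective
        (fun (z : Fin t → F) (j : C) => (lccEncode β x z).eval (α (j : Fin n)))
    ∧ ∀ y : C → F,
        Nat.card {z : Fin t → F //
            (fun (j : C) => (lccEncode β x z).eval (α (j : Fin n))) = y}
          = (Fintype.card F) ^ (t - C.card) := by
  obtain ⟨hsurj, hfiber⟩ := secfc_share_map_surjective_fibers_general hβ
    (hα.comp Subtype.val_injective) (fun (j : C) i => hαβ j (Fin.castAdd t i)) (by simpa using hC) x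
  exact ⟨hsurj, fun y => by simpa [Nat.card] using congrArg Cardinal.toNat (hfiber y)⟩
end
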